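/- In the Calderón–Zygmund decomposition for Sobolev functions on ℝⁿ at height α with exponent q (where 1 ≤ q < ∞, f ∈ C_c^∞(ℝⁿ), α > 0, f = g + Σ_i b_i), the function g can be chosen to agree almost everywhere with a Lipschitz function whose Lipschitz constant is at most Cα: that is, |g(x) − g(y)| ≤ C·α·|x − y| for almost every x, y ∈ ℝⁿ, where C depends only on n and q. -/

import Mathlib

open MeasureTheory Metric ENNReal

/-!
Write `F` for the closed set on which the uncentred maximal function of `|∇f| ^ q` is at most
`α ^ q`. The weak-type inequality bounds the measure of its complement, and the Poincaré inequality
makes `f` Lipschitz on `F` with constant of order `α`. Instead of subtracting from `f` its means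
over Whitney balls of the complement, we subtract its values at nearest points of `F`: then
`g = ∑ φ i • f (p i)` off `F` and `g = f` on `F`, which is Whitney's extension of `f|F` and hence
globally Lipschitz with constant of order `α`. The same choice bounds the energy of the bad parts
`φ i • (f - f (p i))`, by the Poincaré inequality centred at `p i ∈ F`.
-/

namespace CalderonZygmund

open Module Set Function
open scoped NNReal

section VitaliCovering

lemma exists_countable_disjoint_ball_covering {ι X : Type*} [PseudoMetricSpace X]
    [TopologicalSpace.SeparableSpace X] {t : Set ι} {c : ι → X} {r : ι → ℝ} {R : ℝ}
    (hr : ∀ i ∈ t, 0 < r i) (hR : ∀ i ∈ t, r i ≤ R) :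
    ∃ u ⊆ t, u.Countable ∧ u.PairwiseDisjoint (fun i => ball (c i) (r i)) ∧
      ∀ i ∈ t, ∃ j ∈ u, closedBall (c i) (r i) ⊆ closedBall (c j) (5 * r j) := by
  obtain ⟨u, hut, hdisj, hcover⟩ :=
    Vitali.exists_disjoint_subfamily_covering_enlargement_closedBall t c r R hR 5 (by norm_num)
  refine ⟨u, hut, hdisj.countable_of_nonempty_interior fun i hi => ⟨c i, ?_⟩,
    hdisj.mono fun i => ball_subset_closedBall, hcover⟩
  exact ball_subset_interior_closedBall (mem_ball_self (hr i (hut hi)))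

end VitaliCovering

section HaarMeasureOfBalls

variable {E : Type*} [NormedAddCommGroup E] [NormedSpace ℝ E] [FiniteDimensional ℝ E]
  [MeasurableSpace E] [BorelSpace E] (μ : Measure E) [μ.IsAddHaarMeasure]

lemma measure_ball_mul (x y : E) {k : ℝ} (hk : 0 < k) (r : ℝ) :
    μ (ball x (k * r)) = ENNReal.ofReal (k ^ finrank ℝ E) * μ (ball y r) := by
  rw [Measure.addHaar_ball_mul_of_pos μ x hk r, Measure.addHaar_ball_center μ y r]

lemma exists_forall_radius_le_of_measure_ball_le [Nontrivial E] {A : ℝ≥0∞} (hA : A ≠ ∞) :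
    ∃ R : ℝ, ∀ (x : E) (r : ℝ), μ (ball x r) ≤ A → r ≤ R := by
  have hball_pos : 0 < μ (ball (0 : E) 1) := measure_ball_pos _ _ one_pos
  refine ⟨max 1 (A / μ (ball (0 : E) 1)).toReal, fun x r hxr => ?_⟩
  rcases le_or_gt r 1 with hr | hr
  · exact le_max_of_le_left hr
  refine le_max_of_le_right ?_
  have hpow : ENNReal.ofReal (r ^ finrank ℝ E) ≤ A / μ (ball (0 : E) 1) := by
    refine (ENNReal.le_div_iff_mul_le (.inl hball_pos.ne') (.inl measure_ball_lt_top.ne)).2 ?_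
    rwa [← measure_ball_mul μ x 0 (one_pos.trans hr), mul_one]
  calc r ≤ r ^ finrank ℝ E := le_self_pow₀ hr.le finrank_pos.ne'
    _ ≤ _ := (ENNReal.ofReal_le_iff_le_toReal (ENNReal.div_ne_top hA hball_pos.ne')).1 hpow

lemma map_homothety (y : E) {t : ℝ} (ht : 0 < t) :
    μ.map (AffineMap.homothety y t) = ENNReal.ofReal (t ^ finrank ℝ E)⁻¹ • μ := by
  have hcomp : ⇑(AffineMap.homothety y t) = (· + y) ∘ (t • ·) ∘ (· - y) := by
    ext x
    simp [AffineMap.homothety_apply]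
  rw [hcomp, ← Measure.map_map (by fun_prop) (by fun_prop),
    ← Measure.map_map (by fun_prop) (by fun_prop), map_sub_right_eq_self,
    Measure.map_addHaar_smul μ ht.ne', Measure.map_smul, map_add_right_eq_self,
    abs_of_pos (by positivity)]

lemma setLIntegral_ball_comp_homothety (y : E) {t : ℝ} (ht : 0 < t) (R : ℝ) {u : E → ℝ≥0∞}
    (hu : Measurable u) :
    ∫⁻ x in ball y R, u (AffineMap.homothety y t x) ∂μ =
      ENNReal.ofReal (t ^ finrank ℝ E)⁻¹ * ∫⁻ x in ball y (t * R), u x ∂μ := by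
  have hpre : AffineMap.homothety y t ⁻¹' ball y (t * R) = ball y R := by
    ext x
    simp [AffineMap.homothety_apply, dist_eq_norm, norm_smul, abs_of_pos ht, ht]
  have hmeas : Measurable (AffineMap.homothety y t) :=
    (AffineMap.homothety_continuous y t).measurable
  rw [← smul_eq_mul, ← lintegral_smul_measure, ← Measure.restrict_smul, ← map_homothety μ y ht,
    setLIntegral_map measurableSet_ball hu hmeas, hpre]

end HaarMeasureOfBalls

section MaximalFunction

/-- The uncentred Hardy–Littlewood maximal function of `u`: the supremum at `x` of the averages of
`u` over all open balls that contain `x`. -/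
noncomputable def maximalFunction {X : Type*} [PseudoMetricSpace X] [MeasurableSpace X]
    (μ : Measure X) (u : X → ℝ≥0∞) (x : X) : ℝ≥0∞ :=
  ⨆ (c : X) (r : ℝ) (_ : x ∈ ball c r), ⨍⁻ y in ball c r, u y ∂μ

section MetricSpace

variable {X : Type*} [PseudoMetricSpace X] [MeasurableSpace X] {μ : Measure X} {u : X → ℝ≥0∞}
  {A : ℝ≥0∞}

lemma setOf_lt_maximalFunction :
    {x | A < maximalFunction μ u x} =
      ⋃ p ∈ {p : X × ℝ | A < ⨍⁻ y in ball p.1 p.2, u y ∂μ}, ball p.1 p.2 := by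
  ext x
  simp [maximalFunction, lt_iSup_iff, and_comm]

lemma isClosed_setOf_maximalFunction_le : IsClosed {x | maximalFunction μ u x ≤ A} := by
  simp only [← isOpen_compl_iff, compl_ofPred, not_le, setOf_lt_maximalFunction]
  exact isOpen_biUnion fun _ _ => isOpen_ball

lemma setLIntegral_ball_le_of_maximalFunction_le [ProperSpace X] [IsFiniteMeasureOnCompacts μ]
    {x : X} (hx : maximalFunction μ u x ≤ A) (r : ℝ) :
    ∫⁻ y in ball x r, u y ∂μ ≤ A * μ (ball x r) := by
  rcases le_or_gt r 0 with hr | hr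
  · simp [ball_eq_empty.2 hr]
  have havg : ⨍⁻ y in ball x r, u y ∂μ ≤ A :=
    (le_iSup₂_of_le x r <|
      le_iSup (fun _ : x ∈ ball x r => ⨍⁻ y in ball x r, u y ∂μ) (mem_ball_self hr)).trans hx
  rw [← measure_mul_setLAverage u measure_ball_lt_top.ne, mul_comm]
  gcongr

end MetricSpace

variable {E : Type*} [NormedAddCommGroup E] [NormedSpace ℝ E] [FiniteDimensional ℝ E]
  [MeasurableSpace E] [BorelSpace E] {μ : Measure E} [μ.IsAddHaarMeasure]

lemma mul_measure_lt_maximalFunction_le [Nontrivial E] (u : E → ℝ≥0∞) (A : ℝ≥0∞) :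
    A * μ {x | A < maximalFunction μ u x} ≤ 5 ^ finrank ℝ E * ∫⁻ x, u x ∂μ := by
  rcases eq_or_ne A 0 with rfl | hA
  · simp
  rcases eq_or_ne (∫⁻ x, u x ∂μ) ∞ with hu | hu
  · simp [hu]
  let t : Set (E × ℝ) := {p | 0 < p.2 ∧ A < ⨍⁻ y in ball p.1 p.2, u y ∂μ}
  have hmass (p) (hp : p ∈ t) : A * μ (ball p.1 p.2) ≤ ∫⁻ y in ball p.1 p.2, u y ∂μ :=
    ENNReal.mul_le_of_le_div (setLAverage_eq μ u _ ▸ hp.2.le)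
  obtain ⟨R, hR⟩ := exists_forall_radius_le_of_measure_ball_le μ (ENNReal.div_ne_top hu hA)
  obtain ⟨v, hvt, hcount, hdisj, hcover⟩ := exists_countable_disjoint_ball_covering
    (t := t) (c := Prod.fst) (r := Prod.snd) (R := R) (fun p hp => hp.1) fun p hp =>
      hR p.1 p.2 <| ENNReal.le_div_iff_mul_le (.inl hA) (.inr hu) |>.2 <|
        mul_comm A _ ▸ (hmass p hp).trans (setLIntegral_le_lintegral _ _)
  have hsub : {x | A < maximalFunction μ u x} ⊆ ⋃ p ∈ v, closedBall p.1 (5 * p.2) := by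
    rw [setOf_lt_maximalFunction]
    refine iUnion₂_subset fun p hp x hx => ?_
    obtain ⟨p', hp', hpp'⟩ := hcover p ⟨pos_of_mem_ball hx, hp⟩
    exact mem_biUnion hp' (hpp' (ball_subset_closedBall hx))
  have := hcount.to_subtype
  calc A * μ {x | A < maximalFunction μ u x}
      ≤ A * ∑' p : v, μ (closedBall p.1.1 (5 * p.1.2)) := by
        gcongr
        exact (measure_mono hsub).trans (measure_biUnion_le μ hcount _)
    _ = 5 ^ finrank ℝ E * ∑' p : v, A * μ (ball p.1.1 p.1.2) := by
        simp_rw [Measure.addHaar_closedBall_eq_addHaar_ball,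
          fun p : v => measure_ball_mul μ p.1.1 p.1.1 (k := 5) (by norm_num) p.1.2,
          ENNReal.tsum_mul_left]
        norm_num [mul_left_comm]
    _ ≤ 5 ^ finrank ℝ E * ∑' p : v, ∫⁻ y in ball p.1.1 p.1.2, u y ∂μ := by
        gcongr with p
        exact hmass p (hvt p.2)
    _ = 5 ^ finrank ℝ E * ∫⁻ y in ⋃ p ∈ v, ball p.1 p.2, u y ∂μ := by
        rw [lintegral_biUnion hcount (fun _ _ => measurableSet_ball) hdisj]
    _ ≤ 5 ^ finrank ℝ E * ∫⁻ x, u x ∂μ := by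
        gcongr
        exact Measure.restrict_le_self

end MaximalFunction

section PoincareInequality

lemma enorm_sub_rpow_mul_measure_le {X G : Type*} [TopologicalSpace X] [MeasurableSpace X]
    [OpensMeasurableSpace X] {μ : Measure X} [NormedAddCommGroup G] {f : X → G} {q : ℝ}
    (hf : Continuous f) (hq : 1 ≤ q) (s : Set X) (v w : G) :
    ‖v - w‖ₑ ^ q * μ s ≤
      2 ^ (q - 1) * ((∫⁻ z in s, ‖f z - v‖ₑ ^ q ∂μ) + ∫⁻ z in s, ‖f z - w‖ₑ ^ q ∂μ) := by
  have hmeas : Measurable fun z => ‖f z - v‖ₑ ^ q :=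
    (ENNReal.continuous_rpow_const.comp (hf.sub continuous_const).enorm).measurable
  calc ‖v - w‖ₑ ^ q * μ s = ∫⁻ _ in s, ‖v - w‖ₑ ^ q ∂μ := by simp
    _ ≤ ∫⁻ z in s, 2 ^ (q - 1) * (‖f z - v‖ₑ ^ q + ‖f z - w‖ₑ ^ q) ∂μ := by
        refine lintegral_mono fun z => le_trans ?_ (rpow_add_le_mul_rpow_add_rpow _ _ hq)
        gcongr
        simpa only [edist_eq_enorm_sub] using edist_triangle_left v w (f z)
    _ = _ := by rw [lintegral_const_mul' _ _ (by finiteness), lintegral_add_left hmeas]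

variable {E G : Type*} [NormedAddCommGroup E] [NormedSpace ℝ E] [NormedAddCommGroup G]
  [NormedSpace ℝ G] {f : E → G} {q : ℝ}

lemma enorm_deriv_comp_lineMap_le (hf : Differentiable ℝ f) (x y : E) (t : ℝ) :
    ‖deriv (f ∘ AffineMap.lineMap y x) t‖ₑ ≤
      edist x y * ‖fderiv ℝ f (AffineMap.lineMap y x t)‖ₑ := by
  have hderiv := (hf _).hasFDerivAt.comp_hasDerivAt t
    (AffineMap.hasDerivAt_lineMap (a := y) (b := x))
  rw [hderiv.deriv, edist_eq_enorm_sub, mul_comm]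
  exact ContinuousLinearMap.le_opENorm _ _

lemma lintegral_rpow_le_lintegral_rpow {Ω : Type*} [MeasurableSpace Ω] {P : Measure Ω}
    [IsProbabilityMeasure P] {u : Ω → ℝ≥0∞} (hu : AEMeasurable u P) (hq : 1 ≤ q) :
    (∫⁻ ω, u ω ∂P) ^ q ≤ ∫⁻ ω, u ω ^ q ∂P := by
  have hnorm := eLpNorm'_le_eLpNorm'_of_exponent_le one_pos hq P hu.aestronglyMeasurable
  simp only [eLpNorm', enorm_eq_self, rpow_one, div_one] at hnorm
  exact (ENNReal.le_rpow_inv_iff (by linarith)).1 (one_div q ▸ hnorm)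

lemma enorm_sub_rpow_le_lintegral_lineMap (hf : ContDiff ℝ 1 f) (hq : 1 ≤ q) (x y : E) :
    ‖f x - f y‖ₑ ^ q ≤ edist x y ^ q *
      ∫⁻ t in Ioc (0 : ℝ) 1, ‖fderiv ℝ f (AffineMap.lineMap y x t)‖ₑ ^ q := by
  have hq₀ : 0 ≤ q := by linarith
  have hline : ContDiff ℝ 1 (f ∘ AffineMap.lineMap y x : ℝ → G) :=
    hf.comp (by simp only [AffineMap.coe_lineMap, vadd_eq_add, vsub_eq_sub]; fun_prop)
  have hcont : Continuous fun t : ℝ => ‖fderiv ℝ f (AffineMap.lineMap y x t)‖ₑ :=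
    ((hf.continuous_fderiv one_ne_zero).comp AffineMap.lineMap_continuous).enorm
  have : IsProbabilityMeasure (volume.restrict (Ioc (0 : ℝ) 1)) := ⟨by simp⟩
  have hftc : ‖f x - f y‖ₑ ≤
      edist x y * ∫⁻ t in Ioc (0 : ℝ) 1, ‖fderiv ℝ f (AffineMap.lineMap y x t)‖ₑ := by
    calc ‖f x - f y‖ₑ ≤ ∫⁻ t in Icc (0 : ℝ) 1, ‖deriv (f ∘ AffineMap.lineMap y x) t‖ₑ := by
          simpa using enorm_sub_le_lintegral_deriv_of_contDiffOn_Icc hline.contDiffOn zero_le_one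
      _ ≤ ∫⁻ t in Ioc (0 : ℝ) 1, edist x y * ‖fderiv ℝ f (AffineMap.lineMap y x t)‖ₑ := by
          rw [← restrict_Ioc_eq_restrict_Icc]
          exact lintegral_mono (enorm_deriv_comp_lineMap_le (hf.differentiable one_ne_zero) x y)
      _ = _ := lintegral_const_mul' _ _ (edist_ne_top x y)
  calc ‖f x - f y‖ₑ ^ q
      ≤ edist x y ^ q *
          (∫⁻ t in Ioc (0 : ℝ) 1, ‖fderiv ℝ f (AffineMap.lineMap y x t)‖ₑ) ^ q := by
        rw [← ENNReal.mul_rpow_of_nonneg _ _ hq₀]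
        gcongr
    _ ≤ _ := by
        gcongr
        exact lintegral_rpow_le_lintegral_rpow hcont.aemeasurable hq

variable [FiniteDimensional ℝ E] [MeasurableSpace E] [BorelSpace E] {μ : Measure E}
  [μ.IsAddHaarMeasure]

-- After Tonelli, the Jacobian `t⁻ⁿ` of the dilation by `t` about `y` cancels the factor `tⁿ` in the
-- volume of the dilated ball, so no singular kernel appears.
lemma lintegral_ball_enorm_sub_rpow_le (hf : ContDiff ℝ 1 f) (hq : 1 ≤ q) {A : ℝ≥0∞} {y : E}
    {R : ℝ} (hA : ∀ ρ ≤ R, ∫⁻ x in ball y ρ, ‖fderiv ℝ f x‖ₑ ^ q ∂μ ≤ A * μ (ball y ρ)) :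
    ∫⁻ x in ball y R, ‖f x - f y‖ₑ ^ q ∂μ ≤ ENNReal.ofReal R ^ q * (A * μ (ball y R)) := by
  rcases le_or_gt R 0 with hR | hR
  · simp [ball_eq_empty.2 hR]
  let u : E → ℝ≥0∞ := fun x => ‖fderiv ℝ f x‖ₑ ^ q
  have hu : Continuous u :=
    ENNReal.continuous_rpow_const.comp (hf.continuous_fderiv one_ne_zero).enorm
  have hjoint : Continuous (uncurry fun (x : E) (t : ℝ) => u (AffineMap.lineMap y x t)) :=
    hu.comp (by simp only [AffineMap.lineMap_apply]; fun_prop)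
  have hdilate (t : ℝ) (ht : t ∈ Ioc 0 1) :
      ∫⁻ x in ball y R, u (AffineMap.lineMap y x t) ∂μ ≤ A * μ (ball y R) := by
    have htn : 0 < t ^ finrank ℝ E := pow_pos ht.1 _
    calc ∫⁻ x in ball y R, u (AffineMap.lineMap y x t) ∂μ
        = ENNReal.ofReal (t ^ finrank ℝ E)⁻¹ * ∫⁻ x in ball y (t * R), u x ∂μ :=
          setLIntegral_ball_comp_homothety μ y ht.1 R hu.measurable
      _ ≤ ENNReal.ofReal (t ^ finrank ℝ E)⁻¹ * (A * μ (ball y (t * R))) := by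
          gcongr
          exact hA _ (mul_le_of_le_one_left hR.le ht.2)
      _ = (ENNReal.ofReal (t ^ finrank ℝ E)⁻¹ * ENNReal.ofReal (t ^ finrank ℝ E)) *
            (A * μ (ball y R)) := by
          rw [measure_ball_mul μ y y ht.1]
          ring
      _ = A * μ (ball y R) := by
          rw [← ENNReal.ofReal_mul (by positivity), inv_mul_cancel₀ htn.ne', ofReal_one, one_mul]
  calc ∫⁻ x in ball y R, ‖f x - f y‖ₑ ^ q ∂μ
      ≤ ∫⁻ x in ball y R,
          ENNReal.ofReal R ^ q * (∫⁻ t in Ioc (0 : ℝ) 1, u (AffineMap.lineMap y x t)) ∂μ := by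
        refine setLIntegral_mono' measurableSet_ball fun x hx =>
          (enorm_sub_rpow_le_lintegral_lineMap hf hq x y).trans ?_
        gcongr
        rw [edist_dist]
        exact ENNReal.ofReal_le_ofReal (mem_ball.1 hx).le
    _ = ENNReal.ofReal R ^ q *
          ∫⁻ t in Ioc (0 : ℝ) 1, ∫⁻ x in ball y R, u (AffineMap.lineMap y x t) ∂μ := by
        rw [lintegral_const_mul' _ _ (by finiteness), lintegral_lintegral_swap]
        exact hjoint.aemeasurable
    _ ≤ ENNReal.ofReal R ^ q * ∫⁻ _ in Ioc (0 : ℝ) 1, A * μ (ball y R) := by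
        gcongr _ * ?_
        exact setLIntegral_mono' measurableSet_Ioc hdilate
    _ = ENNReal.ofReal R ^ q * (A * μ (ball y R)) := by simp

lemma two_rpow_sub_one_mul_add_self (q : ℝ) (K : ℝ≥0∞) :
    (2 : ℝ≥0∞) ^ (q - 1) * (K + K) = 2 ^ q * K := by
  rw [← two_mul, ← mul_assoc, ENNReal.rpow_sub _ _ two_ne_zero ofNat_ne_top, rpow_one,
    ENNReal.div_mul_cancel two_ne_zero ofNat_ne_top]

lemma lintegral_ball_enorm_sub_rpow_le_of_mem_closedBall (hf : ContDiff ℝ 1 f) (hq : 1 ≤ q)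
    {α : ℝ≥0∞} {w y : E} {R : ℝ} (hw : w ∈ closedBall y R)
    (hα : ∀ r, ∫⁻ z in ball w r, ‖fderiv ℝ f z‖ₑ ^ q ∂μ ≤ α ^ q * μ (ball w r)) :
    ∫⁻ z in ball y R, ‖f z - f w‖ₑ ^ q ∂μ ≤
      (ENNReal.ofReal (2 * R) * α) ^ q * (2 ^ finrank ℝ E * μ (ball y R)) := by
  calc ∫⁻ z in ball y R, ‖f z - f w‖ₑ ^ q ∂μ
      ≤ ∫⁻ z in ball w (2 * R), ‖f z - f w‖ₑ ^ q ∂μ :=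
        lintegral_mono_set (ball_subset_ball' (by linarith [mem_closedBall'.1 hw]))
    _ ≤ ENNReal.ofReal (2 * R) ^ q * (α ^ q * μ (ball w (2 * R))) :=
        lintegral_ball_enorm_sub_rpow_le hf hq fun r _ => hα r
    _ = _ := by
        rw [measure_ball_mul μ w y two_pos, ofReal_pow zero_le_two, ofReal_ofNat, ← mul_assoc,
          ← ENNReal.mul_rpow_of_nonneg _ _ (by linarith)]

-- Average `‖f x - f y‖ ≤ ‖f z - f x‖ + ‖f z - f y‖` over `z` in the ball having `x` and `y` as
-- antipodal points, and apply the Poincaré inequality at both.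
lemma enorm_sub_le_of_average_fderiv_le (hf : ContDiff ℝ 1 f) (hq : 1 ≤ q) {α : ℝ≥0∞} {x y : E}
    (hx : ∀ r, ∫⁻ z in ball x r, ‖fderiv ℝ f z‖ₑ ^ q ∂μ ≤ α ^ q * μ (ball x r))
    (hy : ∀ r, ∫⁻ z in ball y r, ‖fderiv ℝ f z‖ₑ ^ q ∂μ ≤ α ^ q * μ (ball y r)) :
    ‖f x - f y‖ₑ ≤ 2 ^ (finrank ℝ E + 1) * α * edist x y := by
  have hq₀ : 0 < q := by linarith
  rcases eq_or_ne x y with rfl | hxy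
  · simp
  let B := ball (midpoint ℝ x y) (dist x y / 2)
  have hB : μ B ≠ 0 := (measure_ball_pos μ _ (half_pos (dist_pos.2 hxy))).ne'
  have hdiam : ENNReal.ofReal (2 * (dist x y / 2)) = edist x y := by
    rw [mul_div_cancel₀ _ two_ne_zero, edist_dist]
  have haverage : ‖f x - f y‖ₑ ^ q * μ B ≤ 2 ^ q * (edist x y * α) ^ q * 2 ^ finrank ℝ E * μ B := by
    calc ‖f x - f y‖ₑ ^ q * μ B
        ≤ 2 ^ (q - 1) * ((∫⁻ z in B, ‖f z - f x‖ₑ ^ q ∂μ) + ∫⁻ z in B, ‖f z - f y‖ₑ ^ q ∂μ) :=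
          enorm_sub_rpow_mul_measure_le hf.continuous hq B _ _
      _ ≤ 2 ^ (q - 1) * ((edist x y * α) ^ q * (2 ^ finrank ℝ E * μ B) +
            (edist x y * α) ^ q * (2 ^ finrank ℝ E * μ B)) := by
          rw [← hdiam]
          gcongr
          · refine lintegral_ball_enorm_sub_rpow_le_of_mem_closedBall hf hq ?_ hx
            simp [div_eq_inv_mul]
          · refine lintegral_ball_enorm_sub_rpow_le_of_mem_closedBall hf hq ?_ hy
            simp [div_eq_inv_mul]
      _ = _ := by
          rw [two_rpow_sub_one_mul_add_self]
          ring
  rw [ENNReal.mul_le_mul_iff_left hB measure_ball_lt_top.ne] at haverage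
  refine (ENNReal.rpow_le_rpow_iff hq₀).1 (haverage.trans ?_)
  calc 2 ^ q * (edist x y * α) ^ q * 2 ^ finrank ℝ E
      ≤ 2 ^ q * (edist x y * α) ^ q * (2 ^ finrank ℝ E) ^ q := by
        gcongr
        exact ENNReal.le_rpow_self_of_one_le (one_le_pow₀ one_le_two) hq
    _ = (2 ^ (finrank ℝ E + 1) * α * edist x y) ^ q := by
        simp only [← ENNReal.mul_rpow_of_nonneg _ _ hq₀.le]
        ring_nf

end PoincareInequality

section WhitneyCovering

/-- The ball about `c` with radius a quarter of the distance from `c` to `F`; it is empty when `c`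
lies in `F`. -/
noncomputable def whitneyBall {X : Type*} [PseudoMetricSpace X] (F : Set X) (c : X) : Set X :=
  ball c (infDist c F / 4)

/-- A sequence of centres whose Whitney balls cover the complement of `F`, the balls of half the
radius being already sufficient, while those of a tenth of the radius are pairwise disjoint. Spare
indices are filled with points of `F`, which contribute empty balls. -/
structure IsWhitneyCovering {X : Type*} [PseudoMetricSpace X] (F : Set X) (c : ℕ → X) : Prop where
  pairwise_disjoint : Pairwise (Disjoint on fun i => ball (c i) (infDist (c i) F / 40))
  exists_dist_le : ∀ x ∉ F, ∃ i, dist x (c i) ≤ infDist (c i) F / 8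

section MetricSpace

variable {X : Type*} [PseudoMetricSpace X] {F : Set X} {c x p : X}

lemma infDist_center_pos (hx : x ∈ whitneyBall F c) : 0 < infDist c F := by
  have : 0 < infDist c F / 4 := pos_of_mem_ball hx
  linarith

lemma infDist_le_of_mem_whitneyBall (hx : x ∈ whitneyBall F c) :
    infDist x F ≤ 5 / 4 * infDist c F := by
  linarith [mem_ball.1 hx, infDist_le_infDist_add_dist (s := F) (x := x) (y := c)]

lemma le_infDist_of_mem_whitneyBall (hx : x ∈ whitneyBall F c) :
    3 / 4 * infDist c F ≤ infDist x F := by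
  linarith [mem_ball'.1 hx, infDist_le_infDist_add_dist (s := F) (x := c) (y := x)]

lemma infDist_pos_of_mem_whitneyBall (hx : x ∈ whitneyBall F c) : 0 < infDist x F := by
  linarith [infDist_center_pos hx, le_infDist_of_mem_whitneyBall hx]

lemma whitneyBall_subset_compl : whitneyBall F c ⊆ Fᶜ := fun _ hx hxF =>
  (infDist_pos_of_mem_whitneyBall hx).ne' (infDist_zero_of_mem hxF)

lemma whitneyBall_subset_ball (hp : dist c p = infDist c F) :
    whitneyBall F c ⊆ ball p (5 * (infDist c F / 4)) :=
  ball_subset_ball' (by rw [hp]; linarith)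

lemma dist_le_of_mem_whitneyBall (hp : dist c p = infDist c F) (hx : x ∈ whitneyBall F c) :
    dist x p ≤ 5 / 3 * infDist x F := by
  linarith [mem_ball.1 (whitneyBall_subset_ball hp hx), le_infDist_of_mem_whitneyBall hx]

lemma infDist_le_mul_of_dist_le {x x' : X} (h : dist x x' ≤ infDist x F / 2) :
    infDist x F ≤ 2 * infDist x' F := by
  linarith [infDist_le_infDist_add_dist (s := F) (x := x) (y := x')]

end MetricSpace

variable {E : Type*} [NormedAddCommGroup E] [NormedSpace ℝ E] [FiniteDimensional ℝ E]

section Packing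

lemma card_mul_pow_le_of_pairwiseDisjoint_ball {ι : Type*} {s : Finset ι} {c : ι → E} {r : ι → ℝ}
    (hdisj : (s : Set ι).PairwiseDisjoint fun i => ball (c i) (r i)) {δ R : ℝ} {x : E}
    (hδ : 0 < δ) (hR : 0 < R) (hr : ∀ i ∈ s, δ ≤ r i)
    (hsub : ∀ i ∈ s, ball (c i) (r i) ⊆ ball x R) :
    s.card * δ ^ finrank ℝ E ≤ R ^ finrank ℝ E := by
  borelize E
  let ν : Measure E := Measure.addHaar
  have hball (y : E) {ρ : ℝ} (hρ : 0 < ρ) :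
      ν (ball y ρ) = ENNReal.ofReal (ρ ^ finrank ℝ E) * ν (ball 0 1) := by
    simpa only [mul_one] using measure_ball_mul ν y 0 hρ 1
  have hmeasure : ENNReal.ofReal (s.card * δ ^ finrank ℝ E) * ν (ball 0 1) ≤
      ENNReal.ofReal (R ^ finrank ℝ E) * ν (ball 0 1) := by
    calc ENNReal.ofReal (s.card * δ ^ finrank ℝ E) * ν (ball 0 1)
        = ∑ i ∈ s, ν (ball (c i) δ) := by
          simp only [hball _ hδ, Finset.sum_const, nsmul_eq_mul]
          rw [ENNReal.ofReal_mul (by positivity), ENNReal.ofReal_natCast, mul_assoc]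
      _ ≤ ∑ i ∈ s, ν (ball (c i) (r i)) :=
          Finset.sum_le_sum fun i hi => measure_mono (ball_subset_ball (hr i hi))
      _ = ν (⋃ i ∈ s, ball (c i) (r i)) :=
          (measure_biUnion_finset hdisj fun _ _ => measurableSet_ball).symm
      _ ≤ ν (ball x R) := measure_mono (iUnion₂_subset hsub)
      _ = _ := hball x hR
  rwa [ENNReal.mul_le_mul_iff_left (measure_ball_pos ν 0 one_pos).ne' measure_ball_lt_top.ne,
    ENNReal.ofReal_le_ofReal_iff (by positivity)] at hmeasure

end Packing

section Existence

variable [MeasurableSpace E] [BorelSpace E] (μ : Measure E) [μ.IsAddHaarMeasure] {F : Set E}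

lemma exists_forall_infDist_le [Nontrivial E] (hμF : μ Fᶜ ≠ ∞) : ∃ R : ℝ, ∀ x, infDist x F ≤ R := by
  obtain ⟨R, hR⟩ := exists_forall_radius_le_of_measure_ball_le μ hμF
  exact ⟨R, fun x => hR x _ (measure_mono ball_infDist_subset_compl)⟩

lemma exists_isWhitneyCovering [Nontrivial E] (hF : IsClosed F) (hne : F.Nonempty)
    (hμF : μ Fᶜ ≠ ∞) : ∃ c, IsWhitneyCovering F c := by
  obtain ⟨R, hR⟩ := exists_forall_infDist_le μ hμF
  obtain ⟨u, -, hcount, hdisj, hcover⟩ := exists_countable_disjoint_ball_covering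
    (t := Fᶜ) (c := id) (r := fun x => infDist x F / 40) (R := R / 40)
    (fun x hx => div_pos ((hF.notMem_iff_infDist_pos hne).1 hx) (by norm_num))
    fun x _ => by linarith [hR x]
  obtain ⟨z, hz⟩ := hne
  have := hcount.to_subtype
  obtain ⟨e, he⟩ := exists_injective_nat u
  let c : ℕ → E := extend e Subtype.val fun _ => z
  have hc (a : u) : c (e a) = a := he.extend_apply _ _ a
  have hc' (i : ℕ) (hi : i ∉ range e) : ball (c i) (infDist (c i) F / 40) = ∅ := by
    have hci : c i = z := extend_apply' _ _ i hi
    simp [hci, infDist_zero_of_mem hz]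
  refine ⟨c, fun i j hij => ?_, fun x hx => ?_⟩
  · change Disjoint (ball (c i) _) (ball (c j) _)
    by_cases hi : i ∈ range e
    · by_cases hj : j ∈ range e
      · obtain ⟨⟨a, rfl⟩, ⟨b, rfl⟩⟩ := And.intro hi hj
        rw [hc, hc]
        exact hdisj a.2 b.2 fun hab => hij (congrArg e (Subtype.ext hab))
      · simp [hc' j hj]
    · simp [hc' i hi]
  · obtain ⟨y, hy, hxy⟩ := hcover x hx
    have hxy' : dist x y ≤ 5 * (infDist y F / 40) :=
      hxy (mem_closedBall_self (div_nonneg infDist_nonneg (by norm_num)))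
    exact ⟨e ⟨y, hy⟩, by rw [hc]; linarith⟩

end Existence

namespace IsWhitneyCovering

variable {F : Set E} {c : ℕ → E}

lemma card_le (h : IsWhitneyCovering F c) {x : E} {s : Finset ℕ}
    (hs : ∀ i ∈ s, x ∈ whitneyBall F (c i)) : s.card ≤ 50 ^ finrank ℝ E := by
  rcases s.eq_empty_or_nonempty with rfl | ⟨j, hj⟩
  · simp
  have hd : 0 < infDist x F := infDist_pos_of_mem_whitneyBall (hs j hj)
  have hpack := card_mul_pow_le_of_pairwiseDisjoint_ball (s := s) (x := x) (δ := infDist x F / 50)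
    (fun i _ k _ hik => h.pairwise_disjoint hik) (by positivity) hd
    (fun i hi => by linarith [infDist_le_of_mem_whitneyBall (hs i hi)])
    (fun i hi => ball_subset_ball' (by
      linarith [le_infDist_of_mem_whitneyBall (hs i hi), mem_ball'.1 (hs i hi)]))
  rw [div_pow, mul_div_assoc', div_le_iff₀ (by positivity), mul_comm,
    mul_le_mul_iff_right₀ (by positivity)] at hpack
  exact_mod_cast hpack

lemma finite_setOf_mem (h : IsWhitneyCovering F c) (x : E) :
    {i | x ∈ whitneyBall F (c i)}.Finite := by
  by_contra hinf
  obtain ⟨s, hs, hcard⟩ := Set.Infinite.exists_subset_card_eq hinf (50 ^ finrank ℝ E + 1)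
  exact (h.card_le fun i hi => hs hi).not_gt (by omega)

/-- The finite set of indices of the Whitney balls that contain `x`. -/
noncomputable def indices (h : IsWhitneyCovering F c) (x : E) : Finset ℕ :=
  (h.finite_setOf_mem x).toFinset

@[simp]
lemma mem_indices (h : IsWhitneyCovering F c) {x : E} {i : ℕ} :
    i ∈ h.indices x ↔ x ∈ whitneyBall F (c i) := by
  simp [indices]

lemma card_indices_le (h : IsWhitneyCovering F c) (x : E) :
    (h.indices x).card ≤ 50 ^ finrank ℝ E :=
  h.card_le fun _ => h.mem_indices.1

lemma card_indices_union_le (h : IsWhitneyCovering F c) (x x' : E) :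
    ((h.indices x ∪ h.indices x').card : ℝ) ≤ 2 * 50 ^ finrank ℝ E := by
  exact_mod_cast (Finset.card_union_le _ _).trans
    (by linarith [h.card_indices_le x, h.card_indices_le x'])

lemma tsum_indicator_le (h : IsWhitneyCovering F c) (x : E) :
    ∑' i, (whitneyBall F (c i)).indicator (fun _ => (1 : ℝ≥0∞)) x ≤
      (50 ^ finrank ℝ E : ℕ) := by
  rw [tsum_eq_sum (s := h.indices x) fun i hi =>
    indicator_of_notMem (fun hx => hi (h.mem_indices.2 hx)) _]
  calc ∑ i ∈ h.indices x, (whitneyBall F (c i)).indicator (fun _ => (1 : ℝ≥0∞)) x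
      ≤ ∑ _i ∈ h.indices x, 1 := Finset.sum_le_sum fun i _ => indicator_le_self _ _ x
    _ ≤ _ := by simpa using mod_cast h.card_indices_le x

lemma tsum_measure_le [MeasurableSpace E] [BorelSpace E] (h : IsWhitneyCovering F c)
    (μ : Measure E) [μ.IsAddHaarMeasure] :
    ∑' i, μ (whitneyBall F (c i)) ≤ 10 ^ finrank ℝ E * μ Fᶜ := by
  have hscale (i : ℕ) : μ (whitneyBall F (c i)) =
      10 ^ finrank ℝ E * μ (ball (c i) (infDist (c i) F / 40)) := by
    rw [whitneyBall, show infDist (c i) F / 4 = 10 * (infDist (c i) F / 40) by ring,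
      measure_ball_mul μ _ (c i) (by norm_num), ofReal_pow (by norm_num), ofReal_ofNat]
  have hsub (i : ℕ) : ball (c i) (infDist (c i) F / 40) ⊆ Fᶜ :=
    (ball_subset_ball (by linarith [infDist_nonneg (x := c i) (s := F)])).trans
      whitneyBall_subset_compl
  simp_rw [hscale, ENNReal.tsum_mul_left,
    ← measure_iUnion h.pairwise_disjoint fun _ => measurableSet_ball]
  gcongr
  exact iUnion_subset hsub

end IsWhitneyCovering

end WhitneyCovering

section StickBreaking

/-- The `i`-th piece broken off a stick of unit length when step `j` removes the fraction `w j` of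
what is left. -/
def stickBreaking (w : ℕ → ℝ) (i : ℕ) : ℝ :=
  w i * ∏ j ∈ Finset.range i, (1 - w j)

variable {v w : ℕ → ℝ}

lemma stickBreaking_mem_Icc (hw : ∀ j, w j ∈ Icc 0 1) (i : ℕ) : stickBreaking w i ∈ Icc 0 1 := by
  have hrest : ∏ j ∈ Finset.range i, (1 - w j) ∈ Icc 0 1 :=
    ⟨Finset.prod_nonneg fun j _ => sub_nonneg.2 (hw j).2,
      Finset.prod_le_one (fun j _ => sub_nonneg.2 (hw j).2) fun j _ => by linarith [(hw j).1]⟩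
  exact ⟨mul_nonneg (hw i).1 hrest.1, mul_le_one₀ (hw i).2 hrest.1 hrest.2⟩

lemma sum_range_stickBreaking (w : ℕ → ℝ) (m : ℕ) :
    ∑ i ∈ Finset.range m, stickBreaking w i = 1 - ∏ j ∈ Finset.range m, (1 - w j) := by
  induction m with
  | zero => simp
  | succ m ih =>
    rw [Finset.sum_range_succ, Finset.prod_range_succ, ih, stickBreaking]
    ring

lemma hasSum_stickBreaking {k : ℕ} (hk : w k = 1) : HasSum (stickBreaking w) 1 := by
  have hzero {m : ℕ} (hm : k < m) : ∏ j ∈ Finset.range m, (1 - w j) = 0 :=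
    Finset.prod_eq_zero (Finset.mem_range.2 hm) (by rw [hk, sub_self])
  have hsum : ∑ i ∈ Finset.range (k + 1), stickBreaking w i = 1 := by
    rw [sum_range_stickBreaking, hzero k.lt_succ_self, sub_zero]
  rw [← hsum]
  refine hasSum_sum_of_ne_finset_zero fun i hi => ?_
  rw [stickBreaking, hzero (by simpa [Nat.lt_succ_iff] using hi), mul_zero]

lemma abs_mul_sub_mul_le {a a' b b' : ℝ} (ha : |a| ≤ 1) (hb' : |b'| ≤ 1) :
    |a * b - a' * b'| ≤ |a - a'| + |b - b'| := by
  calc |a * b - a' * b'| = |a * (b - b') + (a - a') * b'| := by ring_nf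
    _ ≤ |a| * |b - b'| + |a - a'| * |b'| := by
        simpa only [abs_mul] using abs_add_le (a * (b - b')) ((a - a') * b')
    _ ≤ 1 * |b - b'| + |a - a'| * 1 := by gcongr
    _ = _ := by ring

lemma abs_prod_le_one {ι : Type*} {b : ι → ℝ} (s : Finset ι) (hb : ∀ i, |b i| ≤ 1) :
    |∏ i ∈ s, b i| ≤ 1 := by
  rw [Finset.abs_prod]
  exact Finset.prod_le_one (fun _ _ => abs_nonneg _) fun i _ => hb i

lemma abs_prod_sub_prod_le {ι : Type*} {a b : ι → ℝ} (s : Finset ι) (ha : ∀ i, |a i| ≤ 1)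
    (hb : ∀ i, |b i| ≤ 1) : |∏ i ∈ s, a i - ∏ i ∈ s, b i| ≤ ∑ i ∈ s, |a i - b i| := by
  classical
  induction s using Finset.induction_on with
  | empty => simp
  | insert i s hi ih =>
    rw [Finset.prod_insert hi, Finset.prod_insert hi, Finset.sum_insert hi]
    exact (abs_mul_sub_mul_le (ha i) (abs_prod_le_one s hb)).trans (by gcongr)

lemma abs_stickBreaking_sub_le (hv : ∀ j, v j ∈ Icc 0 1) (hw : ∀ j, w j ∈ Icc 0 1) (i : ℕ) :
    |stickBreaking v i - stickBreaking w i| ≤ ∑ j ∈ Finset.range (i + 1), |v j - w j| := by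
  have hcompl {u : ℕ → ℝ} (hu : ∀ j, u j ∈ Icc 0 1) (j : ℕ) : |1 - u j| ≤ 1 :=
    abs_le.2 ⟨by linarith [(hu j).2], by linarith [(hu j).1]⟩
  rw [Finset.sum_range_succ, add_comm]
  refine (abs_mul_sub_mul_le (abs_le.2 ⟨?_, (hv i).2⟩)
    (abs_prod_le_one _ (hcompl hw))).trans ?_
  · linarith [(hv i).1]
  · gcongr
    refine (abs_prod_sub_prod_le _ (hcompl hv) (hcompl hw)).trans_eq ?_
    exact Finset.sum_congr rfl fun j _ => by rw [_root_.sub_sub_sub_cancel_left, abs_sub_comm]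

end StickBreaking

section WhitneyPartition

open scoped ContDiff

lemma exists_bump (E : Type*) [NormedAddCommGroup E] [NormedSpace ℝ E] [FiniteDimensional ℝ E] :
    ∃ L : ℝ≥0, ∀ (c : E) (r : ℝ), ∃ ψ : E → ℝ, ContDiff ℝ ∞ ψ ∧ (∀ x, ψ x ∈ Icc 0 1) ∧
      support ψ ⊆ ball c r ∧ (0 < r → ∀ x, dist x c ≤ r / 2 → ψ x = 1) ∧
      ∀ x x', r * |ψ x - ψ x'| ≤ L * dist x x' := by
  let b : ContDiffBump (0 : E) := ⟨1 / 2, 1, by norm_num, by norm_num⟩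
  have hb : ContDiff ℝ ∞ b := b.contDiff
  obtain ⟨L, hL⟩ := hb.lipschitzWith_of_hasCompactSupport b.hasCompactSupport (by simp)
  refine ⟨L, fun c r => ?_⟩
  rcases le_or_gt r 0 with hr | hr
  · exact ⟨0, contDiff_const, fun _ => by simp, by simp, fun h => absurd h hr.not_gt,
      fun x x' => by simpa using by positivity⟩
  have hdist (x x' : E) : dist (r⁻¹ • (x - c)) (r⁻¹ • (x' - c)) = r⁻¹ * dist x x' := by
    rw [dist_smul₀, dist_sub_right, Real.norm_of_nonneg (by positivity)]
  have hnorm (x : E) : dist (r⁻¹ • (x - c)) 0 = r⁻¹ * dist x c := by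
    simpa using hdist x c
  refine ⟨fun x => b (r⁻¹ • (x - c)), hb.comp (by fun_prop), fun x => ⟨b.nonneg, b.le_one⟩,
    fun x hx => ?_, fun _ x hx => b.one_of_mem_closedBall ?_, fun x x' => ?_⟩
  · have hmem : r⁻¹ • (x - c) ∈ ball 0 b.rOut := b.support_eq ▸ hx
    rwa [mem_ball, hnorm, inv_mul_lt_iff₀ hr, mul_one] at hmem
  · rw [mem_closedBall, hnorm, inv_mul_le_iff₀ hr]
    exact hx.trans_eq (div_eq_mul_one_div r 2)
  · have hlip := hL.dist_le_mul (r⁻¹ • (x - c)) (r⁻¹ • (x' - c))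
    rwa [hdist, mul_left_comm, le_inv_mul_iff₀ hr] at hlip

variable {E : Type*} [NormedAddCommGroup E] [NormedSpace ℝ E] [FiniteDimensional ℝ E]

/-- A smooth partition of unity on the complement of `F` subordinate to the Whitney balls with
centres `c`, whose members vary at `x` on the scale of the distance from `x` to `F`. The last
condition is multiplied out so as to be meaningful on `F`, where it holds trivially. -/
structure IsWhitneyPartition (F : Set E) (c : ℕ → E) (φ : ℕ → E → ℝ) (Λ : ℝ≥0) : Prop where
  contDiff : ∀ i, ContDiff ℝ ∞ (φ i)
  mem_Icc : ∀ i x, φ i x ∈ Icc 0 1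
  support_subset : ∀ i, support (φ i) ⊆ whitneyBall F (c i)
  hasSum_one : ∀ x ∉ F, HasSum (fun i => φ i x) 1
  infDist_mul_abs_sub_le : ∀ i x x', dist x x' ≤ infDist x F / 2 →
    infDist x F * |φ i x - φ i x'| ≤ Λ * dist x x'

variable {F : Set E} {c : ℕ → E}

lemma IsWhitneyCovering.infDist_mul_sum_abs_sub_le (h : IsWhitneyCovering F c) {ψ : ℕ → E → ℝ}
    {L : ℝ≥0} (hsupp : ∀ j, support (ψ j) ⊆ whitneyBall F (c j))
    (hlip : ∀ j x x', infDist (c j) F / 4 * |ψ j x - ψ j x'| ≤ L * dist x x') {x x' : E}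
    (hxx' : dist x x' ≤ infDist x F / 2) (s : Finset ℕ) :
    infDist x F * ∑ j ∈ s, |ψ j x - ψ j x'| ≤ 20 * 50 ^ finrank ℝ E * L * dist x x' := by
  classical
  let J := h.indices x ∪ h.indices x'
  have hoff (j : ℕ) (hj : j ∉ J) : |ψ j x - ψ j x'| = 0 := by
    simp only [J, Finset.mem_union, h.mem_indices, not_or] at hj
    rw [notMem_support.1 fun hx => hj.1 (hsupp j hx), notMem_support.1 fun hx => hj.2 (hsupp j hx),
      sub_self, abs_zero]
  have hscale (j : ℕ) (hj : j ∈ J) : infDist x F ≤ 10 * (infDist (c j) F / 4) := by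
    rcases Finset.mem_union.1 hj with hj | hj <;> rw [h.mem_indices] at hj
    · linarith [infDist_le_of_mem_whitneyBall hj, infDist_center_pos hj]
    · linarith [infDist_le_of_mem_whitneyBall hj, infDist_le_mul_of_dist_le hxx']
  have hterm (j : ℕ) (hj : j ∈ J) : infDist x F * |ψ j x - ψ j x'| ≤ 10 * (L * dist x x') := by
    calc infDist x F * |ψ j x - ψ j x'| ≤ 10 * (infDist (c j) F / 4) * |ψ j x - ψ j x'| := by
          gcongr
          exact hscale j hj
      _ ≤ 10 * (L * dist x x') := by linarith [hlip j x x']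
  calc infDist x F * ∑ j ∈ s, |ψ j x - ψ j x'|
      ≤ infDist x F * ∑ j ∈ J, |ψ j x - ψ j x'| := by
        refine mul_le_mul_of_nonneg_left ?_ infDist_nonneg
        rw [Finset.sum_subset (Finset.subset_union_right (s₁ := s)) fun j _ => hoff j]
        exact Finset.sum_le_sum_of_subset_of_nonneg Finset.subset_union_left fun _ _ _ =>
          abs_nonneg _
    _ ≤ J.card • (10 * (L * dist x x')) := by
        rw [Finset.mul_sum]
        exact Finset.sum_le_card_nsmul _ _ _ hterm
    _ ≤ (2 * 50 ^ finrank ℝ E) * (10 * (L * dist x x')) := by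
        rw [nsmul_eq_mul]
        gcongr
        exact h.card_indices_union_le x x'
    _ = _ := by ring

lemma exists_isWhitneyPartition (E : Type*) [NormedAddCommGroup E] [NormedSpace ℝ E]
    [FiniteDimensional ℝ E] :
    ∃ Λ : ℝ≥0, ∀ {F : Set E} {c : ℕ → E}, IsClosed F → F.Nonempty → IsWhitneyCovering F c →
      ∃ φ, IsWhitneyPartition F c φ Λ := by
  obtain ⟨L, hL⟩ := exists_bump E
  refine ⟨20 * 50 ^ finrank ℝ E * L, fun {F c} hF hne h => ?_⟩
  choose ψ hsmooth hIcc hsupp hone hlip using fun i => hL (c i) (infDist (c i) F / 4)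
  refine ⟨fun i x => stickBreaking (fun j => ψ j x) i, fun i => ?_,
    fun i x => stickBreaking_mem_Icc (fun j => hIcc j x) i,
    fun i => (support_mul_subset_left _ _).trans (hsupp i), fun x hx => ?_, fun i x x' hxx' => ?_⟩
  · exact (hsmooth i).mul (contDiff_prod fun j _ => contDiff_const.sub (hsmooth j))
  · obtain ⟨k, hk⟩ := h.exists_dist_le x hx
    have hpos : 0 < infDist x F := (hF.notMem_iff_infDist_pos hne).1 hx
    refine hasSum_stickBreaking (hone k ?_ x (by linarith))
    linarith [infDist_le_infDist_add_dist (s := F) (x := x) (y := c k)]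
  · calc infDist x F * |stickBreaking (fun j => ψ j x) i - stickBreaking (fun j => ψ j x') i|
        ≤ infDist x F * ∑ j ∈ Finset.range (i + 1), |ψ j x - ψ j x'| :=
          mul_le_mul_of_nonneg_left
            (abs_stickBreaking_sub_le (fun j => hIcc j x) (fun j => hIcc j x') i) infDist_nonneg
      _ ≤ _ := by exact_mod_cast h.infDist_mul_sum_abs_sub_le hsupp hlip hxx' _

end WhitneyPartition

section Decomposition

variable {E G : Type*} [NormedAddCommGroup E] [NormedSpace ℝ E] [NormedAddCommGroup G]
  [NormedSpace ℝ G]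

/-- The `i`-th bad part of `f`: the oscillation of `f` about its value at the anchor `p i`, cut off
by the `i`-th member of a Whitney partition. Taking the value at a point of the closed set, rather
than the mean over the Whitney ball, makes the good part an extension of `f` from that set. -/
def badPart (f : E → G) (φ : ℕ → E → ℝ) (p : ℕ → E) (i : ℕ) (x : E) : G :=
  φ i x • (f x - f (p i))

/-- What remains of `f` once all its bad parts are removed. -/
noncomputable def goodPart (f : E → G) (φ : ℕ → E → ℝ) (p : ℕ → E) (x : E) : G :=
  f x - ∑' i, badPart f φ p i x

variable {F : Set E} {c p : ℕ → E} {φ : ℕ → E → ℝ} {Λ K : ℝ≥0} {f : E → G}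

lemma support_badPart_subset (hφ : IsWhitneyPartition F c φ Λ) (i : ℕ) :
    support (badPart f φ p i) ⊆ whitneyBall F (c i) :=
  (support_smul_subset_left _ _).trans (hφ.support_subset i)

lemma contDiff_badPart (hφ : IsWhitneyPartition F c φ Λ) (hf : ContDiff ℝ 1 f) (i : ℕ) :
    ContDiff ℝ 1 (badPart f φ p i) :=
  ((hφ.contDiff i).of_le (by norm_cast)).smul (hf.sub contDiff_const)

lemma goodPart_of_mem (hφ : IsWhitneyPartition F c φ Λ) {x : E} (hx : x ∈ F) :
    goodPart f φ p x = f x := by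
  have hbad (i : ℕ) : badPart f φ p i x = 0 :=
    notMem_support.1 fun hi => whitneyBall_subset_compl (support_badPart_subset hφ i hi) hx
  simp [goodPart, hbad]

lemma IsWhitneyPartition.infDist_mul_norm_fderiv_le (hφ : IsWhitneyPartition F c φ Λ) (i : ℕ)
    (x : E) :
    infDist x F * ‖fderiv ℝ (φ i) x‖ ≤ Λ := by
  rcases (infDist_nonneg (x := x) (s := F)).eq_or_lt with hd | hd
  · simp [← hd]
  rw [← le_div_iff₀' hd]
  refine norm_fderiv_le_of_lip' ℝ (by positivity) ?_
  filter_upwards [closedBall_mem_nhds x (half_pos hd)] with x' hx'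
  have hosc := hφ.infDist_mul_abs_sub_le i x x' (mem_closedBall'.1 hx')
  rwa [div_mul_eq_mul_div, le_div_iff₀' hd, ← dist_eq_norm, ← dist_eq_norm, Real.dist_eq,
    abs_sub_comm, dist_comm x']

lemma norm_fderiv_badPart_le (hφ : IsWhitneyPartition F c φ Λ) (hf : Differentiable ℝ f) {i : ℕ}
    {x : E} (hx : x ∈ whitneyBall F (c i)) :
    ‖fderiv ℝ (badPart f φ p i) x‖ ≤
      ‖fderiv ℝ f x‖ + Λ / (infDist (c i) F / 4) * ‖f x - f (p i)‖ := by
  have hδ := infDist_center_pos hx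
  have hφx : ‖fderiv ℝ (φ i) x‖ ≤ Λ / (infDist (c i) F / 4) := by
    rw [le_div_iff₀' (by positivity)]
    refine le_trans ?_ (hφ.infDist_mul_norm_fderiv_le i x)
    gcongr
    linarith [le_infDist_of_mem_whitneyBall hx]
  have hderiv : HasFDerivAt (badPart f φ p i) _ x :=
    (((hφ.contDiff i).differentiable (by simp)) x).hasFDerivAt.smul
      ((hf x).hasFDerivAt.sub_const (f (p i)))
  rw [hderiv.fderiv]
  refine (norm_add_le _ _).trans (add_le_add ?_ ?_)
  · rw [norm_smul, Real.norm_of_nonneg (hφ.mem_Icc i x).1]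
    exact mul_le_of_le_one_left (norm_nonneg _) (hφ.mem_Icc i x).2
  · rw [ContinuousLinearMap.norm_smulRight_apply]
    gcongr

lemma enorm_fderiv_badPart_le (hφ : IsWhitneyPartition F c φ Λ) (hf : Differentiable ℝ f) {i : ℕ}
    {x : E} (hx : x ∈ whitneyBall F (c i)) :
    ‖fderiv ℝ (badPart f φ p i) x‖ₑ ≤
      ‖fderiv ℝ f x‖ₑ + ENNReal.ofReal (Λ / (infDist (c i) F / 4)) * ‖f x - f (p i)‖ₑ := by
  have hδ := infDist_center_pos hx
  simp only [← ofReal_norm]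
  rw [← ENNReal.ofReal_mul (by positivity), ← ENNReal.ofReal_add (by positivity) (by positivity)]
  exact ENNReal.ofReal_le_ofReal (norm_fderiv_badPart_le hφ hf hx)

section FiniteDimensional

variable [FiniteDimensional ℝ E]

namespace IsWhitneyPartition

lemma eq_zero_of_notMem_indices (h : IsWhitneyCovering F c) (hφ : IsWhitneyPartition F c φ Λ)
    {x : E} {i : ℕ} (hi : i ∉ h.indices x) : φ i x = 0 :=
  notMem_support.1 fun hx => hi (h.mem_indices.2 (hφ.support_subset i hx))

lemma sum_eq_one (h : IsWhitneyCovering F c) (hφ : IsWhitneyPartition F c φ Λ) {x : E}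
    (hx : x ∉ F) {J : Finset ℕ} (hJ : h.indices x ⊆ J) : ∑ i ∈ J, φ i x = 1 :=
  (hasSum_sum_of_ne_finset_zero fun _ hi => hφ.eq_zero_of_notMem_indices h (mt (@hJ _) hi)).unique
    (hφ.hasSum_one x hx)

end IsWhitneyPartition

lemma goodPart_eq_sum (h : IsWhitneyCovering F c) (hφ : IsWhitneyPartition F c φ Λ) {x : E}
    (hx : x ∉ F) {J : Finset ℕ} (hJ : h.indices x ⊆ J) :
    goodPart f φ p x = ∑ i ∈ J, φ i x • f (p i) := by
  have hbad : ∑' i, badPart f φ p i x = ∑ i ∈ J, φ i x • (f x - f (p i)) :=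
    tsum_eq_sum fun i hi => by
      rw [badPart, hφ.eq_zero_of_notMem_indices h (mt (@hJ _) hi), zero_smul]
  simp only [goodPart, hbad, smul_sub, Finset.sum_sub_distrib, ← Finset.sum_smul,
    hφ.sum_eq_one h hx hJ, one_smul, _root_.sub_sub_cancel]

-- Both families of weights sum to one, so any constant may be subtracted from the values `f (p i)`.
lemma goodPart_sub_goodPart_eq_sum (h : IsWhitneyCovering F c) (hφ : IsWhitneyPartition F c φ Λ)
    {x x' : E} (hx : x ∉ F) (hx' : x' ∉ F) (v : G) :
    goodPart f φ p x - goodPart f φ p x' =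
      ∑ i ∈ h.indices x ∪ h.indices x', (φ i x - φ i x') • (f (p i) - v) := by
  have hsub : h.indices x ⊆ h.indices x ∪ h.indices x' := Finset.subset_union_left
  have hsub' : h.indices x' ⊆ h.indices x ∪ h.indices x' := Finset.subset_union_right
  simp only [smul_sub, sub_smul, Finset.sum_sub_distrib, ← Finset.sum_smul,
    goodPart_eq_sum h hφ hx hsub, goodPart_eq_sum h hφ hx' hsub', hφ.sum_eq_one h hx hsub,
    hφ.sum_eq_one h hx' hsub', sub_self, sub_zero]

lemma dist_goodPart_le (h : IsWhitneyCovering F c) (hφ : IsWhitneyPartition F c φ Λ)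
    (hpF : ∀ i, p i ∈ F) (hp : ∀ i, dist (c i) (p i) = infDist (c i) F)
    (hf : LipschitzOnWith K f F) (x : E) {z : E} (hz : z ∈ F) :
    dist (goodPart f φ p x) (f z) ≤ 3 * K * dist x z := by
  by_cases hx : x ∈ F
  · rw [goodPart_of_mem hφ hx]
    refine (hf.dist_le_mul x hx z hz).trans ?_
    gcongr
    linarith [K.coe_nonneg]
  have hanchor (i : ℕ) (hi : i ∈ h.indices x) : f (p i) ∈ closedBall (f z) (3 * K * dist x z) := by
    have hpz : dist (p i) z ≤ 3 * dist x z := by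
      linarith [dist_triangle_left (p i) z x, infDist_le_dist_of_mem (x := x) hz,
        dist_le_of_mem_whitneyBall (hp i) (h.mem_indices.1 hi), infDist_nonneg (x := x) (s := F)]
    calc dist (f (p i)) (f z) ≤ K * dist (p i) z := hf.dist_le_mul (p i) (hpF i) z hz
      _ ≤ K * (3 * dist x z) := by gcongr
      _ = _ := by ring
  rw [goodPart_eq_sum h hφ hx subset_rfl]
  exact (convex_closedBall (f z) _).sum_mem (fun i _ => (hφ.mem_Icc i x).1)
    (hφ.sum_eq_one h hx subset_rfl) hanchor

lemma dist_goodPart_le_of_infDist_le (hF : IsClosed F) (h : IsWhitneyCovering F c)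
    (hφ : IsWhitneyPartition F c φ Λ) (hpF : ∀ i, p i ∈ F)
    (hp : ∀ i, dist (c i) (p i) = infDist (c i) F) (hf : LipschitzOnWith K f F) {x x' : E}
    (hfar : infDist x F / 2 ≤ dist x x') :
    dist (goodPart f φ p x) (goodPart f φ p x') ≤ K * 15 * dist x x' := by
  obtain ⟨z, hz, hxz⟩ := hF.exists_infDist_eq_dist ⟨p 0, hpF 0⟩ x
  calc dist (goodPart f φ p x) (goodPart f φ p x')
      ≤ dist (goodPart f φ p x) (f z) + dist (goodPart f φ p x') (f z) := dist_triangle_right _ _ _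
    _ ≤ 3 * K * dist x z + 3 * K * dist x' z := by
        gcongr <;> exact dist_goodPart_le h hφ hpF hp hf _ hz
    _ ≤ 3 * K * (2 * dist x x') + 3 * K * (3 * dist x x') := by
        gcongr
        · linarith
        · linarith [dist_triangle_left x' z x]
    _ = _ := by ring

lemma dist_anchor_le_of_dist_le (h : IsWhitneyCovering F c)
    (hp : ∀ i, dist (c i) (p i) = infDist (c i) F) {x x' : E}
    (hnear : dist x x' ≤ infDist x F / 2) {i : ℕ} (hi : i ∈ h.indices x ∪ h.indices x') :
    dist x (p i) ≤ 3 * infDist x F := by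
  rcases Finset.mem_union.1 hi with hi | hi <;> rw [h.mem_indices] at hi
  · linarith [dist_le_of_mem_whitneyBall (hp i) hi, infDist_nonneg (x := x) (s := F)]
  · linarith [dist_le_of_mem_whitneyBall (hp i) hi, dist_triangle x x' (p i), dist_comm x x',
      infDist_le_infDist_add_dist (s := F) (x := x') (y := x)]

lemma dist_goodPart_le_of_lt_infDist (hF : IsClosed F) (h : IsWhitneyCovering F c)
    (hφ : IsWhitneyPartition F c φ Λ) (hpF : ∀ i, p i ∈ F)
    (hp : ∀ i, dist (c i) (p i) = infDist (c i) F) (hf : LipschitzOnWith K f F) {x x' : E}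
    (hnear : dist x x' < infDist x F / 2) :
    dist (goodPart f φ p x) (goodPart f φ p x') ≤
      K * (8 * 50 ^ finrank ℝ E * Λ) * dist x x' := by
  have hne : F.Nonempty := ⟨p 0, hpF 0⟩
  obtain ⟨z, hz, hxz⟩ := hF.exists_infDist_eq_dist hne x
  have hd : 0 < infDist x F := by linarith [dist_nonneg (x := x) (y := x')]
  have hx : x ∉ F := (hF.notMem_iff_infDist_pos hne).2 hd
  have hx' : x' ∉ F :=
    (hF.notMem_iff_infDist_pos hne).2 (by linarith [infDist_le_mul_of_dist_le hnear.le])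
  have hterm (i : ℕ) (hi : i ∈ h.indices x ∪ h.indices x') :
      ‖(φ i x - φ i x') • (f (p i) - f z)‖ ≤ 4 * K * (Λ * dist x x') := by
    have hpz : dist (p i) z ≤ 4 * infDist x F := by
      linarith [dist_triangle_left (p i) z x, dist_anchor_le_of_dist_le h hp hnear.le hi]
    calc ‖(φ i x - φ i x') • (f (p i) - f z)‖
        = |φ i x - φ i x'| * dist (f (p i)) (f z) := by
          rw [norm_smul, Real.norm_eq_abs, dist_eq_norm]
      _ ≤ |φ i x - φ i x'| * (K * (4 * infDist x F)) := by
          gcongr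
          exact (hf.dist_le_mul _ (hpF i) z hz).trans (by gcongr)
      _ = 4 * K * (infDist x F * |φ i x - φ i x'|) := by ring
      _ ≤ 4 * K * (Λ * dist x x') := by
          gcongr 4 * K * ?_
          exact hφ.infDist_mul_abs_sub_le i x x' hnear.le
  calc dist (goodPart f φ p x) (goodPart f φ p x')
      ≤ (h.indices x ∪ h.indices x').card • (4 * K * (Λ * dist x x')) := by
        rw [dist_eq_norm, goodPart_sub_goodPart_eq_sum h hφ hx hx' (f z)]
        exact (norm_sum_le _ _).trans (Finset.sum_le_card_nsmul _ _ _ hterm)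
    _ ≤ 2 * 50 ^ finrank ℝ E * (4 * K * (Λ * dist x x')) := by
        rw [nsmul_eq_mul]
        gcongr
        exact h.card_indices_union_le x x'
    _ = _ := by ring

lemma lipschitzWith_goodPart (hF : IsClosed F) (h : IsWhitneyCovering F c)
    (hφ : IsWhitneyPartition F c φ Λ) (hpF : ∀ i, p i ∈ F)
    (hp : ∀ i, dist (c i) (p i) = infDist (c i) F) (hf : LipschitzOnWith K f F) :
    LipschitzWith (K * (15 + 8 * 50 ^ finrank ℝ E * Λ)) (goodPart f φ p) := by
  refine LipschitzWith.of_dist_le_mul fun x x' => ?_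
  push_cast
  rcases le_or_gt (infDist x F / 2) (dist x x') with hfar | hnear
  · refine (dist_goodPart_le_of_infDist_le hF h hφ hpF hp hf hfar).trans ?_
    gcongr
    exact le_add_of_nonneg_right (by positivity)
  · refine (dist_goodPart_le_of_lt_infDist hF h hφ hpF hp hf hnear).trans ?_
    gcongr
    exact le_add_of_nonneg_left (by norm_num)

end FiniteDimensional

section Energy

variable [FiniteDimensional ℝ E] [MeasurableSpace E] [BorelSpace E] {μ : Measure E}
  [μ.IsAddHaarMeasure] {q : ℝ}

lemma lintegral_fderiv_badPart_le (hφ : IsWhitneyPartition F c φ Λ) (hf : ContDiff ℝ 1 f)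
    (hq : 1 ≤ q) {i : ℕ} (hp : dist (c i) (p i) = infDist (c i) F) {A : ℝ≥0∞}
    (hA : ∀ r, ∫⁻ x in ball (p i) r, ‖fderiv ℝ f x‖ₑ ^ q ∂μ ≤ A * μ (ball (p i) r)) :
    ∫⁻ x in whitneyBall F (c i), ‖fderiv ℝ (badPart f φ p i) x‖ₑ ^ q ∂μ ≤
      2 ^ (q - 1) * (1 + (5 * Λ) ^ q) * 5 ^ finrank ℝ E * A * μ (whitneyBall F (c i)) := by
  have hq₀ : 0 ≤ q := by linarith
  rcases (infDist_nonneg (x := c i) (s := F)).eq_or_lt with hδ | hδ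
  · simp [whitneyBall, ← hδ]
  let r := infDist (c i) F / 4
  let B := whitneyBall F (c i)
  have hsub : B ⊆ ball (p i) (5 * r) := whitneyBall_subset_ball hp
  have hscale : ENNReal.ofReal (Λ / r) * ENNReal.ofReal (5 * r) = 5 * Λ := by
    rw [← ENNReal.ofReal_mul (by positivity), div_mul_eq_mul_div, mul_comm, mul_right_comm,
      mul_div_cancel_right₀ _ (by positivity), ofReal_mul (by norm_num), ofReal_ofNat,
      ofReal_coe_nnreal]
  have hmeas : Measurable fun x => ‖fderiv ℝ f x‖ₑ ^ q :=
    (ENNReal.continuous_rpow_const.comp (hf.continuous_fderiv one_ne_zero).enorm).measurable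
  calc ∫⁻ x in B, ‖fderiv ℝ (badPart f φ p i) x‖ₑ ^ q ∂μ
      ≤ ∫⁻ x in B, 2 ^ (q - 1) * (‖fderiv ℝ f x‖ₑ ^ q +
          ENNReal.ofReal (Λ / r) ^ q * ‖f x - f (p i)‖ₑ ^ q) ∂μ := by
        refine setLIntegral_mono' measurableSet_ball fun x hx => ?_
        rw [← ENNReal.mul_rpow_of_nonneg _ _ hq₀]
        refine le_trans ?_ (rpow_add_le_mul_rpow_add_rpow _ _ hq)
        gcongr
        exact enorm_fderiv_badPart_le hφ (hf.differentiable one_ne_zero) hx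
    _ = 2 ^ (q - 1) * ((∫⁻ x in B, ‖fderiv ℝ f x‖ₑ ^ q ∂μ) +
          ENNReal.ofReal (Λ / r) ^ q * ∫⁻ x in B, ‖f x - f (p i)‖ₑ ^ q ∂μ) := by
        rw [lintegral_const_mul' _ _ (by finiteness), lintegral_add_left hmeas,
          lintegral_const_mul' _ _ (by finiteness)]
    _ ≤ 2 ^ (q - 1) * (A * μ (ball (p i) (5 * r)) + ENNReal.ofReal (Λ / r) ^ q *
          (ENNReal.ofReal (5 * r) ^ q * (A * μ (ball (p i) (5 * r))))) := by
        gcongr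
        · exact (lintegral_mono_set hsub).trans (hA _)
        · exact (lintegral_mono_set hsub).trans
            (lintegral_ball_enorm_sub_rpow_le hf hq fun ρ _ => hA ρ)
    _ = 2 ^ (q - 1) * (1 + (5 * Λ) ^ q) * 5 ^ finrank ℝ E * A * μ B := by
        rw [← mul_assoc (ENNReal.ofReal (Λ / r) ^ q), ← ENNReal.mul_rpow_of_nonneg _ _ hq₀, hscale,
          measure_ball_mul μ (p i) (c i) (by norm_num), ofReal_pow (by norm_num), ofReal_ofNat]
        simp only [B, r, whitneyBall]
        ring

end Energy

end Decomposition

lemma ofReal_coe_mul_rpow {C α : ℝ≥0} (hα : 0 < α) (s : ℝ) :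
    ENNReal.ofReal (C * (α : ℝ) ^ s) = C * (α : ℝ≥0∞) ^ s := by
  rw [ENNReal.ofReal_mul C.coe_nonneg, ← ENNReal.ofReal_rpow_of_pos (NNReal.coe_pos.2 hα),
    ofReal_coe_nnreal, ofReal_coe_nnreal]

section GoodSet

lemma lintegral_enorm_fderiv_rpow_ne_top {E G : Type*} [NormedAddCommGroup E] [NormedSpace ℝ E]
    [MeasurableSpace E] [OpensMeasurableSpace E] {μ : Measure E} [IsFiniteMeasureOnCompacts μ]
    [NormedAddCommGroup G] [NormedSpace ℝ G] {f : E → G} {q : ℝ} (hq : 0 < q)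
    (hf : ContDiff ℝ 1 f) (hsupp : HasCompactSupport f) :
    ∫⁻ x, ‖fderiv ℝ f x‖ₑ ^ q ∂μ ≠ ∞ := by
  have hLp : eLpNorm (fderiv ℝ f) (ENNReal.ofReal q) μ < ∞ :=
    ((hf.continuous_fderiv one_ne_zero).memLp_of_hasCompactSupport (hsupp.fderiv ℝ)).2
  simpa only [ENNReal.toReal_ofReal hq.le] using
    (lintegral_rpow_enorm_lt_top_of_eLpNorm_lt_top (by simpa using hq) ofReal_ne_top hLp).ne

variable {E G : Type*} [NormedAddCommGroup E] [NormedSpace ℝ E] [NormedAddCommGroup G]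
  [NormedSpace ℝ G] [MeasurableSpace E]

/-- The set of points at which the maximal function of `‖fderiv ℝ f ·‖ ^ q` is at most `α ^ q`; the
decomposition leaves `f` unchanged there. -/
def goodSet (μ : Measure E) (q : ℝ) (f : E → G) (α : ℝ≥0) : Set E :=
  {x | maximalFunction μ (fun y => ‖fderiv ℝ f y‖ₑ ^ q) x ≤ (α : ℝ≥0∞) ^ q}

variable {μ : Measure E} {q : ℝ} {f : E → G} {α : ℝ≥0}

lemma isClosed_goodSet : IsClosed (goodSet μ q f α) := isClosed_setOf_maximalFunction_le

variable [FiniteDimensional ℝ E] [μ.IsAddHaarMeasure]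

lemma setLIntegral_ball_le_of_mem_goodSet {x : E} (hx : x ∈ goodSet μ q f α) (r : ℝ) :
    ∫⁻ y in ball x r, ‖fderiv ℝ f y‖ₑ ^ q ∂μ ≤ (α : ℝ≥0∞) ^ q * μ (ball x r) :=
  have := FiniteDimensional.proper_real E
  setLIntegral_ball_le_of_maximalFunction_le hx r

variable [BorelSpace E]

lemma lipschitzOnWith_goodSet (hf : ContDiff ℝ 1 f) (hq : 1 ≤ q) :
    LipschitzOnWith (2 ^ (finrank ℝ E + 1) * α) f (goodSet μ q f α) := fun x hx y hy => by
  rw [edist_eq_enorm_sub]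
  push_cast
  exact enorm_sub_le_of_average_fderiv_le hf hq (fun r => setLIntegral_ball_le_of_mem_goodSet hx r)
    (fun r => setLIntegral_ball_le_of_mem_goodSet hy r)

variable [Nontrivial E]

lemma measure_compl_goodSet_le (hα : 0 < α) :
    μ (goodSet μ q f α)ᶜ ≤
      5 ^ finrank ℝ E * (α : ℝ≥0∞) ^ (-q) * ∫⁻ x, ‖fderiv ℝ f x‖ₑ ^ q ∂μ := by
  have hα₀ : (α : ℝ≥0∞) ≠ 0 := by simpa using hα.ne'
  have hweak := mul_measure_lt_maximalFunction_le (μ := μ) (fun y => ‖fderiv ℝ f y‖ₑ ^ q)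
    ((α : ℝ≥0∞) ^ q)
  rw [mul_comm, ← ENNReal.le_div_iff_mul_le (.inl (by simp [hα₀])) (.inl (by finiteness)),
    ENNReal.div_eq_inv_mul, ← ENNReal.rpow_neg] at hweak
  simpa only [goodSet, compl_ofPred, not_le, mul_assoc, mul_left_comm] using hweak

lemma measure_compl_goodSet_ne_top (hα : 0 < α)
    (hfin : ∫⁻ x, ‖fderiv ℝ f x‖ₑ ^ q ∂μ ≠ ∞) : μ (goodSet μ q f α)ᶜ ≠ ∞ := by
  have hα₀ : (α : ℝ≥0∞) ≠ 0 := by simpa using hα.ne'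
  exact ((measure_compl_goodSet_le hα).trans_lt (by finiteness)).ne

lemma goodSet_nonempty (hα : 0 < α) (hfin : ∫⁻ x, ‖fderiv ℝ f x‖ₑ ^ q ∂μ ≠ ∞) :
    (goodSet μ q f α).Nonempty := by
  have := NormedSpace.noncompactSpace ℝ E
  by_contra hempty
  apply measure_compl_goodSet_ne_top hα hfin
  rw [not_nonempty_iff_eq_empty.1 hempty, compl_empty, measure_univ_of_isAddLeftInvariant]

lemma tsum_measure_whitneyBall_goodSet_le {c : ℕ → E} (hc : IsWhitneyCovering (goodSet μ q f α) c)
    (hα : 0 < α) :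
    ∑' i, μ (whitneyBall (goodSet μ q f α) (c i)) ≤
      50 ^ finrank ℝ E * (α : ℝ≥0∞) ^ (-q) * ∫⁻ x, ‖fderiv ℝ f x‖ₑ ^ q ∂μ :=
  calc ∑' i, μ (whitneyBall (goodSet μ q f α) (c i))
      ≤ 10 ^ finrank ℝ E * μ (goodSet μ q f α)ᶜ := hc.tsum_measure_le μ
    _ ≤ 10 ^ finrank ℝ E *
          (5 ^ finrank ℝ E * (α : ℝ≥0∞) ^ (-q) * ∫⁻ x, ‖fderiv ℝ f x‖ₑ ^ q ∂μ) := by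
        gcongr
        exact measure_compl_goodSet_le hα
    _ = _ := by
        rw [← mul_assoc, ← mul_assoc, ← mul_pow]
        norm_num

end GoodSet

end CalderonZygmund

open CalderonZygmund Module in
open scoped NNReal in
theorem statement7_general {E G : Type*} [NormedAddCommGroup E] [NormedSpace ℝ E]
    [FiniteDimensional ℝ E] [Nontrivial E] [MeasurableSpace E] [BorelSpace E] (μ : Measure E)
    [μ.IsAddHaarMeasure] [NormedAddCommGroup G] [NormedSpace ℝ G] [FiniteDimensional ℝ G] {q : ℝ}
    (hq : 1 ≤ q) :
    ∃ (C : ℝ) (N : ℕ), 0 < C ∧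
      ∀ f : E → G, ContDiff ℝ 1 f → ∫⁻ x, ‖fderiv ℝ f x‖ₑ ^ q ∂μ ≠ ∞ →
      ∀ α : ℝ, 0 < α →
      ∃ (c : ℕ → E) (rad : ℕ → ℝ) (b : ℕ → E → G) (g : E → G),
        (∀ i, 0 ≤ rad i) ∧
        (∀ x, f x = g x + ∑' i, b i x) ∧
        (∀ᵐ x ∂μ, DifferentiableAt ℝ g x ∧ ‖fderiv ℝ g x‖ ≤ C * α) ∧
        (∀ i, ContDiff ℝ 1 (b i)) ∧
        (∀ i, Function.support (b i) ⊆ ball (c i) (rad i)) ∧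
        (∀ i, ∫⁻ x in ball (c i) (rad i), ‖fderiv ℝ (b i) x‖ₑ ^ q ∂μ ≤
          ENNReal.ofReal (C * α ^ q) * μ (ball (c i) (rad i))) ∧
        (∑' i, μ (ball (c i) (rad i)) ≤
          ENNReal.ofReal (C * α ^ (-q)) * ∫⁻ x, ‖fderiv ℝ f x‖ₑ ^ q ∂μ) ∧
        (∀ x, ∑' i, (ball (c i) (rad i)).indicator (fun _ => (1 : ℝ≥0∞)) x ≤ N) ∧
        ∀ x y, dist (g x) (g y) ≤ C * α * dist x y := by
  obtain ⟨Λ, hΛ⟩ := exists_isWhitneyPartition E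
  obtain ⟨K, hK⟩ : ∃ K : ℝ≥0, (K : ℝ≥0∞) = 2 ^ (q - 1) * (1 + (5 * Λ) ^ q) * 5 ^ finrank ℝ E :=
    ⟨_, ENNReal.coe_toNNReal (by finiteness)⟩
  obtain ⟨C, hClip, hKC, hCmeas⟩ : ∃ C : ℝ≥0,
      2 ^ (finrank ℝ E + 1) * (15 + 8 * 50 ^ finrank ℝ E * Λ) ≤ C ∧ K ≤ C ∧
        50 ^ finrank ℝ E ≤ C :=
    ⟨_, le_max_left _ (max _ _), (le_max_left _ _).trans (le_max_right _ _),
      (le_max_right _ _).trans (le_max_right _ _)⟩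
  have hC : (0 : ℝ) < C := NNReal.coe_pos.2 (hCmeas.trans_lt' (by positivity))
  refine ⟨C, 50 ^ finrank ℝ E, hC, fun f hf hfin α hα => ?_⟩
  lift α to ℝ≥0 using hα.le
  have hF : IsClosed (goodSet μ q f α) := isClosed_goodSet
  have hne := goodSet_nonempty hα hfin
  obtain ⟨c, hc⟩ := exists_isWhitneyCovering μ hF hne (measure_compl_goodSet_ne_top hα hfin)
  obtain ⟨φ, hφ⟩ := hΛ hF hne hc
  choose p hpF hp using fun i => hF.exists_infDist_eq_dist hne (c i)
  replace hp (i) := (hp i).symm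
  have hlip : LipschitzWith (C * α) (goodPart f φ p) :=
    (lipschitzWith_goodPart hF hc hφ hpF hp (lipschitzOnWith_goodSet hf hq)).weaken <| by
      rw [mul_right_comm]
      gcongr
  refine ⟨c, fun i => infDist (c i) (goodSet μ q f α) / 4, badPart f φ p, goodPart f φ p,
    fun i => div_nonneg infDist_nonneg (by norm_num), fun x => (sub_add_cancel _ _).symm, ?_,
    contDiff_badPart hφ hf, support_badPart_subset hφ, fun i => ?_, ?_, hc.tsum_indicator_le,
    hlip.dist_le_mul⟩
  · filter_upwards [hlip.ae_differentiableAt (μ := μ)] with x hx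
    exact ⟨hx, norm_fderiv_le_of_lipschitz ℝ hlip⟩
  · rw [ofReal_coe_mul_rpow hα]
    refine (lintegral_fderiv_badPart_le hφ hf hq (hp i)
      (setLIntegral_ball_le_of_mem_goodSet (hpF i))).trans ?_
    rw [← hK]
    gcongr
    rfl
  · rw [ofReal_coe_mul_rpow hα]
    refine (tsum_measure_whitneyBall_goodSet_le hc hα).trans ?_
    gcongr
    exact_mod_cast hCmeas

/-- in the Calderón–Zygmund decomposition for Sobolev functions,
the good part `g` can moreover be chosen to agree almost everywhere with a
Lipschitz function of Lipschitz constant at most `Cα`: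
`|g(x) − g(y)| ≤ C α |x − y|` for a.e. `x, y`. -/
theorem statement7 (n : ℕ) (hn : 1 ≤ n) (q : ℝ) (hq1 : 1 ≤ q) :
    ∃ (C : ℝ) (N : ℕ), 0 < C ∧
      ∀ f : EuclideanSpace ℝ (Fin n) → ℝ, ContDiff ℝ (⊤ : ℕ∞) f → HasCompactSupport f →
      ∀ α : ℝ, 0 < α →
      ∃ (c : ℕ → EuclideanSpace ℝ (Fin n)) (rad : ℕ → ℝ)
        (b : ℕ → EuclideanSpace ℝ (Fin n) → ℝ) (g : EuclideanSpace ℝ (Fin n) → ℝ),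
        (∀ i, 0 ≤ rad i) ∧
        (∀ᵐ x ∂volume, f x = g x + ∑' i, b i x) ∧
        (∀ᵐ x ∂volume, DifferentiableAt ℝ g x ∧ ‖fderiv ℝ g x‖ ≤ C * α) ∧
        (∀ i, ContDiff ℝ 1 (b i)) ∧
        (∀ i, Function.support (b i) ⊆ ball (c i) (rad i)) ∧
        (∀ i, ∫⁻ x in ball (c i) (rad i), (‖fderiv ℝ (b i) x‖₊ : ℝ≥0∞) ^ q ≤
          ENNReal.ofReal (C * α ^ q) * volume (ball (c i) (rad i))) ∧
        (∑' i, volume (ball (c i) (rad i)) ≤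
          ENNReal.ofReal (C * α ^ (-q)) * ∫⁻ x, (‖fderiv ℝ f x‖₊ : ℝ≥0∞) ^ q) ∧
        (∀ x, ∑' i, (ball (c i) (rad i)).indicator (fun _ => (1 : ℝ≥0∞)) x ≤ N) ∧
        -- moreover: g agrees a.e. with a Lipschitz function of constant ≤ C α
        (∃ g' : EuclideanSpace ℝ (Fin n) → ℝ,
          (∀ x y, |g' x - g' y| ≤ C * α * dist x y) ∧ g =ᵐ[volume] g') := by
  have : Nonempty (Fin n) := Fin.pos_iff_nonempty.1 hn
  obtain ⟨C, N, hC, hdecomp⟩ :=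
    statement7_general (G := ℝ) (volume : Measure (EuclideanSpace ℝ (Fin n))) hq1
  refine ⟨C, N, hC, fun f hf hsupp α hα => ?_⟩
  have hf₁ : ContDiff ℝ 1 f := hf.of_le (by norm_cast)
  obtain ⟨c, rad, b, g, hrad, hsum, hg, hb, hsub, henergy, hmeas, hoverlap, hlip⟩ :=
    hdecomp f hf₁ (CalderonZygmund.lintegral_enorm_fderiv_rpow_ne_top (by linarith) hf₁ hsupp) α hα
  exact ⟨c, rad, b, g, hrad, .of_forall hsum, hg, hb, hsub, henergy, hmeas, hoverlap, g, hlip, .rfl⟩
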